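/- arXiv:1711.10889 — 2 statements merged into one kernel-verified Lean document; each statement's English description precedes it below -/
import Mathlib

section
/- Let E be a unital idempotent CPTP map on d×d complex matrices, let a ∈ (0,1)∪(1,2], let ρ be a positive definite density matrix, set N = Tr((E(ρ^a))^{1/a}) and σ* = (E(ρ^a))^{1/a}/N. Then for every positive definite density matrix σ with E(σ) = σ one has (Tr(ρ^a σ^{1−a}))^{1/a} = N · (Tr((σ*)^a σ^{1−a}))^{1/a}, and consequently S̃_a(ρ|σ) = (N − 1)/(a − 1) + N · S̃_a(σ*|σ). -/
open Matrix
open scoped ComplexOrder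

/-- Matrix power `A ^ t` for real `t`, via the continuous functional calculus
(applying `x ↦ x ^ t` to the eigenvalues of a Hermitian matrix `A`). -/
noncomputable def mpow {d : ℕ} (A : Matrix (Fin d) (Fin d) ℂ) (t : ℝ) :
    Matrix (Fin d) (Fin d) ℂ :=
  cfc (fun x : ℝ => x ^ t) A

/-- The Tsallis-based relative entropy
`S̃_a(ρ|σ) = ((Tr (ρ^a σ^(1-a)))^(1/a) - 1) / (a - 1)`. -/
noncomputable def tsallis {d : ℕ} (a : ℝ) (ρ σ : Matrix (Fin d) (Fin d) ℂ) : ℝ :=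
  ((((mpow ρ a * mpow σ (1 - a)).trace).re) ^ (1 / a) - 1) / (a - 1)

open scoped MatrixOrder in
lemma aux_mpow_psd {d : ℕ} {A : Matrix (Fin d) (Fin d) ℂ} (hA : A.PosSemidef) (t : ℝ) :
    (mpow A t).PosSemidef := by
  rw [← Matrix.nonneg_iff_posSemidef]
  unfold mpow
  apply cfc_nonneg
  intro x hx
  exact Real.rpow_nonneg (spectrum_nonneg_of_nonneg hA.nonneg hx) t

open scoped MatrixOrder in
lemma aux_mpow_scale {d : ℕ} {A : Matrix (Fin d) (Fin d) ℂ} (hA : A.PosSemidef) (c a : ℝ)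
    (hc : 0 ≤ c) (ha : 0 < a) :
    mpow (c • mpow A (1 / a)) a = (c ^ a) • A := by
  have hfin := A.finite_real_spectrum
  have hsa : IsSelfAdjoint A := hA.isHermitian
  unfold mpow
  rw [← cfc_const_mul c _ A (hfin.continuousOn _),
    ← cfc_comp' (fun x : ℝ => x ^ a) (fun x : ℝ => c * x ^ (1 / a)) A
      ((hfin.image _).continuousOn _) (hfin.continuousOn _) hsa,
    ← cfc_const_mul_id (c ^ a) A hsa]
  apply cfc_congr
  intro x hx
  have hx0 : 0 ≤ x := spectrum_nonneg_of_nonneg hA.nonneg hx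
  simp only
  rw [Real.mul_rpow hc (Real.rpow_nonneg hx0 _), ← Real.rpow_mul hx0,
    one_div_mul_cancel ha.ne', Real.rpow_one]

open scoped MatrixOrder in
lemma aux_trace_nonneg {d : ℕ} {A B : Matrix (Fin d) (Fin d) ℂ} (hA : A.PosSemidef)
    (hB : B.PosSemidef) : 0 ≤ ((A * B).trace).re := by
  obtain ⟨C, hC⟩ := CStarAlgebra.nonneg_iff_eq_star_mul_self.mp hA.nonneg
  rw [Matrix.star_eq_conjTranspose] at hC
  subst hC
  rw [Matrix.mul_assoc, Matrix.trace_mul_comm]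
  exact (Complex.le_def.mp (hB.mul_mul_conjTranspose_same C).trace_nonneg).1

lemma aux_commute {d n : ℕ} (K : Fin n → Matrix (Fin d) (Fin d) ℂ)
    (hTP : ∑ i, (K i)ᴴ * K i = 1) (hU : ∑ i, K i * (K i)ᴴ = 1)
    (σ : Matrix (Fin d) (Fin d) ℂ) (hσ : σᴴ = σ) (hE : ∑ i, K i * σ * (K i)ᴴ = σ) (i : Fin n) :
    Commute σ (K i) := by
  have key : ∑ i, ((K i * σ - σ * K i) * (K i * σ - σ * K i)ᴴ).trace = 0 := by
    have h1 : ∀ i, ((K i * σ - σ * K i) * (K i * σ - σ * K i)ᴴ).trace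
        = (((K i)ᴴ * K i) * (σ * σ)).trace - ((K i * σ * (K i)ᴴ) * σ).trace
          - (σ * (K i * σ * (K i)ᴴ)).trace + (σ * (K i * (K i)ᴴ) * σ).trace := by
      intro i
      have e : (((K i)ᴴ * K i) * (σ * σ)).trace = (K i * σ * (σ * (K i)ᴴ)).trace := by
        rw [Matrix.mul_assoc, Matrix.trace_mul_comm]
        simp only [Matrix.mul_assoc]
      rw [e, ← Matrix.trace_sub, ← Matrix.trace_sub, ← Matrix.trace_add]
      congr 1
      simp only [conjTranspose_sub, conjTranspose_mul, hσ]
      noncomm_ring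
    simp only [h1, Finset.sum_add_distrib, Finset.sum_sub_distrib, ← Matrix.trace_sum,
      ← Finset.sum_mul, ← Finset.mul_sum, hTP, hU, hE]
    simp
  have hnn : ∀ j ∈ Finset.univ, 0 ≤ ((K j * σ - σ * K j) * (K j * σ - σ * K j)ᴴ).trace :=
    fun j _ => (Matrix.posSemidef_self_mul_conjTranspose _).trace_nonneg
  have h0 := (Finset.sum_eq_zero_iff_of_nonneg hnn).mp key i (Finset.mem_univ _)
  rw [Matrix.trace_mul_conjTranspose_self_eq_zero_iff] at h0
  exact (sub_eq_zero.mp h0).symm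

/-- For a unital idempotent CPTP map `E`, `a ∈ (0,1) ∪ (1,2]`, a positive definite
density matrix `ρ`, `N = Tr((E(ρ^a))^(1/a))` and `σ* = (E(ρ^a))^(1/a)/N`: for every
positive definite density matrix `σ` fixed by `E` one has
`(Tr(ρ^a σ^(1-a)))^(1/a) = N * (Tr((σ*)^a σ^(1-a)))^(1/a)` and consequently
`S̃_a(ρ|σ) = (N - 1)/(a - 1) + N * S̃_a(σ*|σ)`. -/
theorem stmt_4 {d : ℕ}
    (E : Matrix (Fin d) (Fin d) ℂ →ₗ[ℂ] Matrix (Fin d) (Fin d) ℂ)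
    (hKraus : ∃ (n : ℕ) (K : Fin n → Matrix (Fin d) (Fin d) ℂ),
      (∀ X, E X = ∑ i, K i * X * (K i)ᴴ) ∧ ∑ i, (K i)ᴴ * K i = 1)
    (hUnital : E 1 = 1)
    (hIdem : ∀ X, E (E X) = E X)
    (a : ℝ) (ha : a ∈ Set.Ioo (0 : ℝ) 1 ∪ Set.Ioc (1 : ℝ) 2)
    (ρ : Matrix (Fin d) (Fin d) ℂ) (hρ : ρ.PosDef) (hρtr : ρ.trace = 1)
    (N : ℝ) (hN : N = ((mpow (E (mpow ρ a)) (1 / a)).trace).re)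
    (σstar : Matrix (Fin d) (Fin d) ℂ)
    (hσstar : σstar = ((N : ℂ))⁻¹ • mpow (E (mpow ρ a)) (1 / a)) :
    ∀ σ : Matrix (Fin d) (Fin d) ℂ, σ.PosDef → σ.trace = 1 → E σ = σ →
      (((mpow ρ a * mpow σ (1 - a)).trace).re) ^ (1 / a)
          = N * (((mpow σstar a * mpow σ (1 - a)).trace).re) ^ (1 / a) ∧
      tsallis a ρ σ = (N - 1) / (a - 1) + N * tsallis a σstar σ := by
  intro σ hσ hσtr hσE
  obtain ⟨n, K, hK, hTP⟩ := hKraus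
  have ha0 : 0 < a := by
    rcases ha with h | h
    · exact h.1
    · linarith [h.1]
  have hU : ∑ i, K i * (K i)ᴴ = 1 := by
    have := hK 1
    rw [hUnital] at this
    simpa using this.symm
  have hcomm : ∀ i, Commute (mpow σ (1 - a)) (K i) := fun i =>
    (aux_commute K hTP hU σ hσ.isHermitian (by rw [← hK, hσE]) i).cfc_real _
  set S := mpow σ (1 - a) with hS
  have hSpsd : S.PosSemidef := aux_mpow_psd hσ.posSemidef _
  set R := mpow ρ a with hR
  have hRpsd : R.PosSemidef := aux_mpow_psd hρ.posSemidef _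
  have hXpsd : (E R).PosSemidef := by
    rw [hK]
    exact Matrix.posSemidef_sum _ fun i _ => hRpsd.mul_mul_conjTranspose_same (K i)
  have htr : (E R * S).trace = (R * S).trace := by
    have h1 : ∀ i, (K i * R * (K i)ᴴ * S).trace = (R * ((K i)ᴴ * K i) * S).trace := by
      intro i
      rw [Matrix.mul_assoc, Matrix.mul_assoc, Matrix.trace_mul_comm]
      simp only [Matrix.mul_assoc]
      rw [(hcomm i).eq]
    rw [hK, Finset.sum_mul, Matrix.trace_sum]
    simp only [h1]
    rw [← Matrix.trace_sum, ← Finset.sum_mul, ← Finset.mul_sum, hTP, Matrix.mul_one]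
  have hBpsd : (mpow (E R) (1 / a)).PosSemidef := aux_mpow_psd hXpsd _
  have htn := Complex.le_def.mp hBpsd.trace_nonneg
  have hN0 : 0 ≤ N := by rw [hN]; exact htn.1
  have hmain : (((R * S).trace).re) ^ (1 / a)
      = N * (((mpow σstar a * S).trace).re) ^ (1 / a) := by
    have hs : σstar = (N⁻¹ : ℝ) • mpow (E R) (1 / a) := by
      rw [hσstar]
      ext i j
      simp
    rw [← htr, hs, aux_mpow_scale hXpsd _ _ (inv_nonneg.mpr hN0) ha0]
    rcases hN0.eq_or_lt with h0 | hpos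
    · have hB0 : mpow (E R) (1 / a) = 0 := by
        rw [← hBpsd.trace_eq_zero_iff]
        apply Complex.ext
        · rw [← hN, ← h0]; rfl
        · exact htn.2.symm
      have h1 := aux_mpow_scale hXpsd 1 a zero_le_one ha0
      have h2 := aux_mpow_scale hXpsd 0 a le_rfl ha0
      rw [hB0, smul_zero] at h1 h2
      rw [h1, Real.one_rpow, one_smul, Real.zero_rpow ha0.ne', zero_smul] at h2
      rw [h2, ← h0]
      simp [ha0.ne']
    · have hre : (((N⁻¹ ^ a : ℝ) • E R * S).trace).re = N⁻¹ ^ a * ((E R * S).trace).re := by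
        rw [Matrix.smul_mul, Matrix.trace_smul, Complex.real_smul, Complex.re_ofReal_mul]
      rw [hre, Real.mul_rpow (by positivity) (aux_trace_nonneg hXpsd hSpsd),
        ← Real.rpow_mul (by positivity), mul_one_div_cancel ha0.ne', Real.rpow_one,
        mul_inv_cancel_left₀ hpos.ne']
  refine ⟨hmain, ?_⟩
  unfold tsallis
  rw [← hS, ← hR, hmain]
  ring
end

section
/- Let E be a CPTP map on d×d complex matrices and let a ∈ (0,1)∪(1,2]. Then the function ρ ↦ (Tr((E(ρ^a))^{1/a}) − 1)/(a − 1) is convex on the set of positive definite density matrices: for all positive definite density matrices ρ₁, ρ₂ and all t ∈ [0,1], the value at t·ρ₁ + (1−t)·ρ₂ is at most t times the value at ρ₁ plus (1−t) times the value at ρ₂. -/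
open Matrix
open scoped ComplexOrder

/-- `Re Tr (K A K† Y)`. -/
noncomputable def TT {d : ℕ} (K A Y : Matrix (Fin d) (Fin d) ℂ) : ℝ :=
  (K * A * Kᴴ * Y).trace.re

/-- weighted double sum over the two spectra. -/
noncomputable def JJ {d : ℕ} (φ : ℝ → ℝ → ℝ) (K : Matrix (Fin d) (Fin d) ℂ)
    {A Y : Matrix (Fin d) (Fin d) ℂ} (hA : A.IsHermitian) (hY : Y.IsHermitian) : ℝ :=
  ∑ j, ∑ k, φ (hA.eigenvalues k) (hY.eigenvalues j) *
    Complex.normSq (((hY.eigenvectorUnitary : Matrix (Fin d) (Fin d) ℂ)ᴴ * K *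
      (hA.eigenvectorUnitary : Matrix (Fin d) (Fin d) ℂ)) j k)

lemma cfc_UDU {d : ℕ} {A : Matrix (Fin d) (Fin d) ℂ} (hA : A.IsHermitian) (f : ℝ → ℝ) :
    cfc f A = (hA.eigenvectorUnitary : Matrix (Fin d) (Fin d) ℂ) *
      diagonal (fun i => ((f (hA.eigenvalues i) : ℝ) : ℂ)) *
      (hA.eigenvectorUnitary : Matrix (Fin d) (Fin d) ℂ)ᴴ := by
  rw [hA.cfc_eq, Matrix.IsHermitian.cfc, Unitary.conjStarAlgAut_apply]
  rfl

lemma trace_MDMD {d : ℕ} (M : Matrix (Fin d) (Fin d) ℂ) (f g : Fin d → ℝ) :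
    (M * diagonal (fun i => (f i : ℂ)) * Mᴴ * diagonal (fun i => (g i : ℂ))).trace.re
      = ∑ j, ∑ k, f k * g j * Complex.normSq (M j k) := by
  simp only [Matrix.trace, Matrix.diag_apply, Matrix.mul_diagonal]
  simp only [Matrix.mul_apply (M := M * diagonal _), Matrix.mul_diagonal,
    Matrix.conjTranspose_apply, Complex.re_sum, Finset.sum_mul]
  refine Finset.sum_congr rfl fun j _ => Finset.sum_congr rfl fun k _ => ?_
  simp [Complex.normSq_apply]
  ring

lemma TT_cfc {d : ℕ} (K : Matrix (Fin d) (Fin d) ℂ) {A Y : Matrix (Fin d) (Fin d) ℂ}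
    (hA : A.IsHermitian) (hY : Y.IsHermitian) (f g : ℝ → ℝ) :
    TT K (cfc f A) (cfc g Y) = JJ (fun a y => f a * g y) K hA hY := by
  unfold TT JJ
  rw [← trace_MDMD, cfc_UDU hA f, cfc_UDU hY g]
  congr 1
  simp only [Matrix.conjTranspose_mul, Matrix.conjTranspose_conjTranspose]
  generalize (hA.eigenvectorUnitary : Matrix (Fin d) (Fin d) ℂ) = U
  generalize (hY.eigenvectorUnitary : Matrix (Fin d) (Fin d) ℂ) = V
  simp only [← Matrix.mul_assoc]
  rw [Matrix.trace_mul_comm]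
  simp only [← Matrix.mul_assoc]

lemma cfc_id_h {d : ℕ} {A : Matrix (Fin d) (Fin d) ℂ} (hA : A.IsHermitian) :
    cfc (fun x : ℝ => x) A = A := cfc_id' ℝ A hA

lemma cfc_one_h {d : ℕ} {A : Matrix (Fin d) (Fin d) ℂ} (hA : A.IsHermitian) :
    cfc (fun _ : ℝ => (1 : ℝ)) A = 1 := cfc_const_one ℝ A hA

lemma mix_posDef {d : ℕ} {A B : Matrix (Fin d) (Fin d) ℂ} (hA : A.PosDef) (hB : B.PosDef)
    {t : ℝ} (ht : t ∈ Set.Icc (0 : ℝ) 1) :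
    ((t : ℂ) • A + ((1 - t : ℝ) : ℂ) • B).PosDef := by
  rcases eq_or_lt_of_le ht.1 with h | h
  · subst h; simpa using hB
  · refine Matrix.PosDef.add_posSemidef (hA.smul (by exact_mod_cast h))
      (hB.posSemidef.smul (by exact_mod_cast sub_nonneg.2 ht.2))

/-- Convexity predicate. -/
def CJ (d : ℕ) (φ : ℝ → ℝ → ℝ) : Prop :=
  ∀ (K A₁ A₂ Y₁ Y₂ : Matrix (Fin d) (Fin d) ℂ) (hA₁ : A₁.PosDef) (hA₂ : A₂.PosDef)
    (hY₁ : Y₁.PosDef) (hY₂ : Y₂.PosDef) (t : ℝ) (ht : t ∈ Set.Icc (0 : ℝ) 1),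
    JJ φ K (mix_posDef hA₁ hA₂ ht).1 (mix_posDef hY₁ hY₂ ht).1 ≤
      t * JJ φ K hA₁.1 hY₁.1 + (1 - t) * JJ φ K hA₂.1 hY₂.1

lemma JJ_congr {d : ℕ} {φ ψ : ℝ → ℝ → ℝ} (h : ∀ a y, 0 < a → 0 < y → φ a y = ψ a y)
    (K : Matrix (Fin d) (Fin d) ℂ) {A Y : Matrix (Fin d) (Fin d) ℂ}
    (hA : A.PosDef) (hY : Y.PosDef) : JJ φ K hA.1 hY.1 = JJ ψ K hA.1 hY.1 := by
  unfold JJ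
  refine Finset.sum_congr rfl fun j _ => Finset.sum_congr rfl fun k _ => ?_
  rw [h _ _ (hA.eigenvalues_pos k) (hY.eigenvalues_pos j)]

lemma CJ.congr {d : ℕ} {φ ψ : ℝ → ℝ → ℝ} (hφ : CJ d φ)
    (h : ∀ a y, 0 < a → 0 < y → φ a y = ψ a y) : CJ d ψ := by
  intro K A₁ A₂ Y₁ Y₂ hA₁ hA₂ hY₁ hY₂ t ht
  rw [← JJ_congr h K hA₁ hY₁, ← JJ_congr h K hA₂ hY₂,
    ← JJ_congr h K (mix_posDef hA₁ hA₂ ht) (mix_posDef hY₁ hY₂ ht)]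
  exact hφ K A₁ A₂ Y₁ Y₂ hA₁ hA₂ hY₁ hY₂ t ht

lemma JJ_const_mul {d : ℕ} (φ : ℝ → ℝ → ℝ) (c : ℝ)
    (K : Matrix (Fin d) (Fin d) ℂ) {A Y : Matrix (Fin d) (Fin d) ℂ}
    (hA : A.IsHermitian) (hY : Y.IsHermitian) :
    JJ (fun a y => c * φ a y) K hA hY = c * JJ φ K hA hY := by
  unfold JJ
  simp only [Finset.mul_sum, mul_assoc]

lemma JJ_add {d : ℕ} (φ ψ : ℝ → ℝ → ℝ)
    (K : Matrix (Fin d) (Fin d) ℂ) {A Y : Matrix (Fin d) (Fin d) ℂ}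
    (hA : A.IsHermitian) (hY : Y.IsHermitian) :
    JJ (fun a y => φ a y + ψ a y) K hA hY = JJ φ K hA hY + JJ ψ K hA hY := by
  unfold JJ
  simp only [← Finset.sum_add_distrib, add_mul]

lemma CJ.const_mul {d : ℕ} {φ : ℝ → ℝ → ℝ} (hφ : CJ d φ) {c : ℝ} (hc : 0 ≤ c) :
    CJ d (fun a y => c * φ a y) := by
  intro K A₁ A₂ Y₁ Y₂ hA₁ hA₂ hY₁ hY₂ t ht
  simp only [JJ_const_mul]
  have := mul_le_mul_of_nonneg_left (hφ K A₁ A₂ Y₁ Y₂ hA₁ hA₂ hY₁ hY₂ t ht) hc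
  linarith

lemma CJ.add {d : ℕ} {φ ψ : ℝ → ℝ → ℝ} (hφ : CJ d φ) (hψ : CJ d ψ) :
    CJ d (fun a y => φ a y + ψ a y) := by
  intro K A₁ A₂ Y₁ Y₂ hA₁ hA₂ hY₁ hY₂ t ht
  simp only [JJ_add]
  have h1 := hφ K A₁ A₂ Y₁ Y₂ hA₁ hA₂ hY₁ hY₂ t ht
  have h2 := hψ K A₁ A₂ Y₁ Y₂ hA₁ hA₂ hY₁ hY₂ t ht
  linarith

lemma JJ_fst {d : ℕ} (K : Matrix (Fin d) (Fin d) ℂ) {A Y : Matrix (Fin d) (Fin d) ℂ}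
    (hA : A.IsHermitian) (hY : Y.IsHermitian) :
    JJ (fun a _ => a) K hA hY = TT K A 1 := by
  have := TT_cfc K hA hY (fun x => x) (fun _ => 1)
  rw [cfc_id_h hA, cfc_one_h hY] at this
  simpa using this.symm

lemma JJ_snd {d : ℕ} (K : Matrix (Fin d) (Fin d) ℂ) {A Y : Matrix (Fin d) (Fin d) ℂ}
    (hA : A.IsHermitian) (hY : Y.IsHermitian) :
    JJ (fun _ y => y) K hA hY = TT K 1 Y := by
  have := TT_cfc K hA hY (fun _ => 1) (fun x => x)
  rw [cfc_id_h hY, cfc_one_h hA] at this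
  simpa using this.symm

lemma TT_mix_fst {d : ℕ} (K A₁ A₂ Y : Matrix (Fin d) (Fin d) ℂ) (t : ℝ) :
    TT K ((t : ℂ) • A₁ + ((1 - t : ℝ) : ℂ) • A₂) Y = t * TT K A₁ Y + (1 - t) * TT K A₂ Y := by
  unfold TT
  simp only [Matrix.mul_add, Matrix.add_mul, Matrix.mul_smul, Matrix.smul_mul, Matrix.trace_add,
    Matrix.trace_smul, smul_eq_mul, Complex.add_re, Complex.re_ofReal_mul]

lemma TT_mix_snd {d : ℕ} (K A Y₁ Y₂ : Matrix (Fin d) (Fin d) ℂ) (t : ℝ) :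
    TT K A ((t : ℂ) • Y₁ + ((1 - t : ℝ) : ℂ) • Y₂) = t * TT K A Y₁ + (1 - t) * TT K A Y₂ := by
  unfold TT
  simp only [Matrix.mul_add, Matrix.mul_smul, Matrix.trace_add,
    Matrix.trace_smul, smul_eq_mul, Complex.add_re, Complex.re_ofReal_mul]

lemma CJ_fst (d : ℕ) : CJ d (fun a _ => a) := by
  intro K A₁ A₂ Y₁ Y₂ hA₁ hA₂ hY₁ hY₂ t ht
  simp only [JJ_fst, TT_mix_fst, le_refl]

/-- scalar inequality for the parallel sum -/
lemma scalar_par {a y s : ℝ} (ha : 0 < a) (hy : 0 < y) (hs : 0 < s) (z w : ℂ) :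
    a * y / (a + s * y) * Complex.normSq (z + w) ≤
      s⁻¹ * (a * Complex.normSq z) + y * Complex.normSq w := by
  have h : 0 < a + s * y := by positivity
  rw [div_mul_eq_mul_div, div_le_iff₀ h]
  have : (s⁻¹ * (a * Complex.normSq z) + y * Complex.normSq w) * (a + s * y)
      - a * y * Complex.normSq (z + w) =
      s⁻¹ * ((a * z.re - s * y * w.re) ^ 2 + (a * z.im - s * y * w.im) ^ 2) := by
    simp only [Complex.normSq_apply, Complex.add_re, Complex.add_im]
    field_simp
    ring
  have h2 : 0 ≤ s⁻¹ * ((a * z.re - s * y * w.re) ^ 2 + (a * z.im - s * y * w.im) ^ 2) := by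
    positivity
  linarith

lemma JJ_par_le {d : ℕ} {s : ℝ} (hs : 0 < s) (Z W : Matrix (Fin d) (Fin d) ℂ)
    {A Y : Matrix (Fin d) (Fin d) ℂ} (hA : A.PosDef) (hY : Y.PosDef) :
    JJ (fun a y => a * y / (a + s * y)) (Z + W) hA.1 hY.1 ≤ s⁻¹ * TT Z A 1 + TT W 1 Y := by
  rw [← JJ_fst Z hA.1 hY.1, ← JJ_snd W hA.1 hY.1]
  unfold JJ
  simp only [Finset.mul_sum, ← Finset.sum_add_distrib]
  refine Finset.sum_le_sum fun j _ => Finset.sum_le_sum fun k _ => ?_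
  rw [Matrix.mul_add, Matrix.add_mul, Matrix.add_apply]
  exact scalar_par (hA.eigenvalues_pos k) (hY.eigenvalues_pos j) hs _ _

lemma JJ_par_eq {d : ℕ} {s : ℝ} (hs : 0 < s) (K : Matrix (Fin d) (Fin d) ℂ)
    {A Y : Matrix (Fin d) (Fin d) ℂ} (hA : A.PosDef) (hY : Y.PosDef) :
    ∃ Z W, Z + W = K ∧
    s⁻¹ * TT Z A 1 + TT W 1 Y = JJ (fun a y => a * y / (a + s * y)) K hA.1 hY.1 := by
  set U : Matrix (Fin d) (Fin d) ℂ := (hA.1.eigenvectorUnitary : Matrix (Fin d) (Fin d) ℂ) with hU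
  set V : Matrix (Fin d) (Fin d) ℂ := (hY.1.eigenvectorUnitary : Matrix (Fin d) (Fin d) ℂ) with hV
  have hU1 : Uᴴ * U = 1 := Unitary.coe_star_mul_self hA.1.eigenvectorUnitary
  have hU2 : U * Uᴴ = 1 := Unitary.coe_mul_star_self hA.1.eigenvectorUnitary
  have hV1 : Vᴴ * V = 1 := Unitary.coe_star_mul_self hY.1.eigenvectorUnitary
  have hV2 : V * Vᴴ = 1 := Unitary.coe_mul_star_self hY.1.eigenvectorUnitary
  set M : Matrix (Fin d) (Fin d) ℂ := Vᴴ * K * U with hM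
  set a := hA.1.eigenvalues
  set y := hY.1.eigenvalues
  let z : Matrix (Fin d) (Fin d) ℂ := Matrix.of fun j k => ((s * y j / (a k + s * y j) : ℝ) : ℂ) * M j k
  let w : Matrix (Fin d) (Fin d) ℂ := Matrix.of fun j k => ((a k / (a k + s * y j) : ℝ) : ℂ) * M j k
  have hz : Vᴴ * (V * z * Uᴴ) * U = z := by
    calc _ = (Vᴴ * V) * z * (Uᴴ * U) := by simp only [Matrix.mul_assoc]
      _ = z := by simp [hU1, hV1]
  have hw : Vᴴ * (V * w * Uᴴ) * U = w := by
    calc _ = (Vᴴ * V) * w * (Uᴴ * U) := by simp only [Matrix.mul_assoc]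
      _ = w := by simp [hU1, hV1]
  have hpos : ∀ j k, 0 < a k + s * y j := fun j k =>
    add_pos (hA.eigenvalues_pos k) (mul_pos hs (hY.eigenvalues_pos j))
  refine ⟨V * z * Uᴴ, V * w * Uᴴ, ?_, ?_⟩
  · rw [← Matrix.add_mul, ← Matrix.mul_add]
    have : z + w = M := by
      ext j k
      simp only [Matrix.add_apply, z, w, Matrix.of_apply]
      rw [← add_mul, ← Complex.ofReal_add, ← add_div, add_comm (s * y j),
        div_self (hpos j k).ne']
      simp
    rw [this, hM]
    calc _ = (V * Vᴴ) * K * (U * Uᴴ) := by simp only [Matrix.mul_assoc]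
      _ = K := by simp [hU2, hV2]
  · rw [← JJ_fst _ hA.1 hY.1, ← JJ_snd _ hA.1 hY.1]
    unfold JJ
    simp only [Finset.mul_sum, ← Finset.sum_add_distrib]
    refine Finset.sum_congr rfl fun j _ => Finset.sum_congr rfl fun k _ => ?_
    rw [← hU, ← hV, hz, hw, ← hM]
    simp only [z, w, Matrix.of_apply, Complex.normSq_mul, Complex.normSq_ofReal]
    have := hpos j k
    change s⁻¹ * (a k * _) + y j * _ = a k * y j / (a k + s * y j) * _
    field_simp
    ring

lemma CJ_par (d : ℕ) {s : ℝ} (hs : 0 < s) : CJ d (fun a y => -1 * (a * y / (a + s * y))) := by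
  intro K A₁ A₂ Y₁ Y₂ hA₁ hA₂ hY₁ hY₂ t ht
  simp only [JJ_const_mul]
  obtain ⟨Z, W, rfl, h⟩ := JJ_par_eq hs K (mix_posDef hA₁ hA₂ ht) (mix_posDef hY₁ hY₂ ht)
  rw [← h, TT_mix_fst, TT_mix_snd]
  have h1 := mul_le_mul_of_nonneg_left (JJ_par_le hs Z W hA₁ hY₁) ht.1
  have h2 := mul_le_mul_of_nonneg_left (JJ_par_le hs Z W hA₂ hY₂) (sub_nonneg.2 ht.2)
  linarith

lemma CJ_par2 (d : ℕ) {s : ℝ} (hs : 0 < s) : CJ d (fun a y => a ^ 2 / (a + s * y)) := by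
  refine ((CJ_fst d).add ((CJ_par d hs).const_mul hs.le)).congr fun a y ha hy => ?_
  have : 0 < a + s * y := by positivity
  field_simp
  ring

lemma CJ_two (d : ℕ) : CJ d (fun a y => a ^ 2 / y) := by
  intro K A₁ A₂ Y₁ Y₂ hA₁ hA₂ hY₁ hY₂ t ht
  have key : ∀ {A Y : Matrix (Fin d) (Fin d) ℂ} (hA : A.PosDef) (hY : Y.PosDef),
      Filter.Tendsto (fun s : ℝ => JJ (fun a y => s * (a ^ 2 / (a + s * y))) K hA.1 hY.1)
        Filter.atTop (nhds (JJ (fun a y => a ^ 2 / y) K hA.1 hY.1)) := by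
    intro A Y hA hY
    unfold JJ
    refine tendsto_finsetSum _ fun j _ => tendsto_finsetSum _ fun k _ => ?_
    refine Filter.Tendsto.mul_const _ ?_
    have ha := hA.eigenvalues_pos k
    have hy := hY.eigenvalues_pos j
    set a := hA.1.eigenvalues k
    set y := hY.1.eigenvalues j
    have h1 : Filter.Tendsto (fun s : ℝ => a ^ 2 / (a * s⁻¹ + y)) Filter.atTop
        (nhds (a ^ 2 / (a * 0 + y))) := by
      refine Filter.Tendsto.div tendsto_const_nhds
        ((tendsto_inv_atTop_zero.const_mul a).add_const y) (by simpa using hy.ne')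
    rw [mul_zero, zero_add] at h1
    refine h1.congr' ?_
    filter_upwards [Filter.eventually_gt_atTop 0] with s hs
    have : 0 < a + s * y := by positivity
    field_simp
  refine le_of_tendsto_of_tendsto (key (mix_posDef hA₁ hA₂ ht) (mix_posDef hY₁ hY₂ ht))
    (((key hA₁ hY₁).const_mul t).add ((key hA₂ hY₂).const_mul (1 - t))) ?_
  filter_upwards [Filter.eventually_gt_atTop 0] with s hs
  exact ((CJ_par2 d hs).const_mul hs.le) K A₁ A₂ Y₁ Y₂ hA₁ hA₂ hY₁ hY₂ t ht

open MeasureTheory in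
lemma CJ_integral {d : ℕ} {g : ℝ → ℝ → ℝ → ℝ} (hg : ∀ s, 0 < s → CJ d (g s))
    (hi : ∀ a y, 0 < a → 0 < y → IntegrableOn (fun s => g s a y) (Set.Ioi 0)) :
    CJ d (fun a y => ∫ s in Set.Ioi 0, g s a y) := by
  intro K A₁ A₂ Y₁ Y₂ hA₁ hA₂ hY₁ hY₂ t ht
  have int : ∀ {A Y : Matrix (Fin d) (Fin d) ℂ} (hA : A.PosDef) (hY : Y.PosDef),
      IntegrableOn (fun s => JJ (g s) K hA.1 hY.1) (Set.Ioi 0) := by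
    intro A Y hA hY
    unfold JJ
    refine integrable_finsetSum _ fun j _ => integrable_finsetSum _ fun k _ => ?_
    exact (hi _ _ (hA.eigenvalues_pos k) (hY.eigenvalues_pos j)).mul_const _
  have key : ∀ {A Y : Matrix (Fin d) (Fin d) ℂ} (hA : A.PosDef) (hY : Y.PosDef),
      JJ (fun a y => ∫ s in Set.Ioi 0, g s a y) K hA.1 hY.1 =
        ∫ s in Set.Ioi 0, JJ (g s) K hA.1 hY.1 := by
    intro A Y hA hY
    unfold JJ
    rw [integral_finsetSum]
    · refine Finset.sum_congr rfl fun j _ => ?_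
      rw [integral_finsetSum]
      · refine Finset.sum_congr rfl fun k _ => ?_
        rw [integral_mul_const]
      · intro k _
        exact (hi _ _ (hA.eigenvalues_pos k) (hY.eigenvalues_pos j)).mul_const _
    · intro j _
      refine integrable_finsetSum _ fun k _ => ?_
      exact (hi _ _ (hA.eigenvalues_pos k) (hY.eigenvalues_pos j)).mul_const _
  rw [key hA₁ hY₁, key hA₂ hY₂, key (mix_posDef hA₁ hA₂ ht) (mix_posDef hY₁ hY₂ ht),
    ← integral_const_mul, ← integral_const_mul, ← integral_add]
  · refine setIntegral_mono_on (int (mix_posDef hA₁ hA₂ ht) (mix_posDef hY₁ hY₂ ht)) ?_ measurableSet_Ioi fun s hs => ?_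
    · exact ((int hA₁ hY₁).const_mul t).add ((int hA₂ hY₂).const_mul (1 - t))
    · exact hg s hs K A₁ A₂ Y₁ Y₂ hA₁ hA₂ hY₁ hY₂ t ht
  · exact (int hA₁ hY₁).const_mul t
  · exact (int hA₂ hY₂).const_mul (1 - t)

lemma integrand_eq {q s a y : ℝ} (hs : 0 < s) (ha : 0 < a) (hy : 0 < y) :
    Real.rpowIntegrand₀₁ q s (a / y) = s ^ q * s⁻¹ * (a / (a + s * y)) := by
  unfold Real.rpowIntegrand₀₁
  have : 0 < a + s * y := by positivity
  have : 0 < s + a / y := by positivity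
  field_simp
  ring

lemma CJ_lieb (d : ℕ) {q : ℝ} (hq : q ∈ Set.Ioo (0 : ℝ) 1) :
    CJ d (fun a y => -1 * (y * (a / y) ^ q)) := by
  have h := CJ_integral (d := d) (g := fun s a y => (-y) * Real.rpowIntegrand₀₁ q s (a / y))
    (fun s hs => ((CJ_par d hs).const_mul (c := s ^ q * s⁻¹) (by positivity)).congr
      fun a y ha hy => by rw [integrand_eq hs ha hy]; ring)
    (fun a y ha hy => (Real.integrableOn_rpowIntegrand₀₁_Ioi hq (by positivity)).const_mul _)
  refine (h.const_mul (inv_nonneg.2 (Real.integral_rpowIntegrand₀₁_one_pos hq).le)).congr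
    fun a y ha hy => ?_
  rw [Real.rpow_eq_const_mul_integral hq (by positivity : 0 ≤ a / y),
    MeasureTheory.integral_const_mul]
  ring

lemma CJ_ando (d : ℕ) {q : ℝ} (hq : q ∈ Set.Ioo (0 : ℝ) 1) :
    CJ d (fun a y => a * (a / y) ^ q) := by
  have h := CJ_integral (d := d) (g := fun s a y => a * Real.rpowIntegrand₀₁ q s (a / y))
    (fun s hs => ((CJ_par2 d hs).const_mul (c := s ^ q * s⁻¹) (by positivity)).congr
      fun a y ha hy => by rw [integrand_eq hs ha hy]; ring)
    (fun a y ha hy => (Real.integrableOn_rpowIntegrand₀₁_Ioi hq (by positivity)).const_mul _)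
  refine (h.const_mul (inv_nonneg.2 (Real.integral_rpowIntegrand₀₁_one_pos hq).le)).congr
    fun a y ha hy => ?_
  rw [Real.rpow_eq_const_mul_integral hq (by positivity : 0 ≤ a / y),
    MeasureTheory.integral_const_mul]
  ring

lemma CJ_main (d : ℕ) {p : ℝ} (hp : p ∈ Set.Ioo (0 : ℝ) 1 ∪ Set.Ioc (1 : ℝ) 2) :
    CJ d (fun a y => 1 / (p * (p - 1)) * (a ^ p * y ^ (1 - p))) := by
  rcases hp with hp | hp
  · refine ((CJ_lieb d hp).const_mul (c := 1 / (p * (1 - p))) ?_).congr fun a y ha hy => ?_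
    · have := hp.1; have := sub_pos.2 hp.2; positivity
    · rw [Real.div_rpow ha.le hy.le, Real.rpow_sub hy, Real.rpow_one,
        show p * (p - 1) = -(p * (1 - p)) by ring, one_div, one_div, inv_neg]
      ring
  · have hc : 0 ≤ 1 / (p * (p - 1)) := by
      have := hp.1; have := sub_pos.2 hp.1; positivity
    rcases eq_or_lt_of_le hp.2 with rfl | h2
    · refine ((CJ_two d).const_mul hc).congr fun a y ha hy => ?_
      rw [show (1 - 2 : ℝ) = -1 by norm_num, Real.rpow_neg_one, Real.rpow_two]
      ring
    · refine ((CJ_ando d (q := p - 1) ⟨by linarith [hp.1], by linarith⟩).const_mul hc).congr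
        fun a y ha hy => ?_
      rw [Real.div_rpow ha.le hy.le, Real.rpow_sub ha, Real.rpow_one,
        show 1 - p = -(p - 1) by ring, Real.rpow_neg hy.le]
      field_simp

lemma scalar_young {a x y : ℝ} (ha : a ∈ Set.Ioo (0 : ℝ) 1 ∪ Set.Ioc (1 : ℝ) 2)
    (hx : 0 ≤ x) (hy : 0 < y) :
    1 / (a - 1) * x ^ (1 / a) ≤ 1 / (a * (a - 1)) * (x * y ^ (1 - a)) + 1 / a * y := by
  have ha0 : 0 < a := by rcases ha with h | h <;> linarith [h.1]
  have ha1 : a - 1 ≠ 0 := by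
    rcases ha with h | h
    · linarith [h.2]
    · linarith [h.1]
  obtain ⟨r, hr, rfl⟩ : ∃ r : ℝ, 0 ≤ r ∧ x = (r * y) ^ a := by
    refine ⟨x ^ (1 / a) / y, by positivity, ?_⟩
    rw [div_mul_cancel₀ _ hy.ne', ← Real.rpow_mul hx, one_div_mul_cancel ha0.ne', Real.rpow_one]
  have e1 : ((r * y) ^ a) ^ (1 / a) = r * y := by
    rw [← Real.rpow_mul (by positivity), mul_one_div_cancel ha0.ne', Real.rpow_one]
  have e2 : (r * y) ^ a * y ^ (1 - a) = r ^ a * y := by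
    rw [Real.mul_rpow hr hy.le, mul_assoc, ← Real.rpow_add hy]
    simp
  rw [e1, e2]
  have key : 0 ≤ (r ^ a - (1 + a * (r - 1))) / (a - 1) := by
    rcases ha with h | h
    · refine div_nonneg_of_nonpos ?_ (by linarith [h.2])
      have := rpow_one_add_le_one_add_mul_self (s := r - 1) (by linarith) h.1.le h.2.le
      rw [add_sub_cancel] at this
      linarith
    · refine div_nonneg ?_ (by linarith [h.1])
      have := one_add_mul_self_le_rpow_one_add (s := r - 1) (by linarith) h.1.le
      rw [add_sub_cancel] at this
      linarith
  have : 1 / (a * (a - 1)) * (r ^ a * y) + 1 / a * y - 1 / (a - 1) * (r * y)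
    = y / a * ((r ^ a - (1 + a * (r - 1))) / (a - 1)) := by
    field_simp
    ring
  have h3 : 0 ≤ y / a * ((r ^ a - (1 + a * (r - 1))) / (a - 1)) := by positivity
  linarith

lemma scalar_eps {a x ε : ℝ} (ha : a ∈ Set.Ioo (0 : ℝ) 1 ∪ Set.Ioc (1 : ℝ) 2)
    (hx : 0 ≤ x) (hε : 0 < ε) :
    1 / (a * (a - 1)) * (x * (x ^ (1 / a) + ε) ^ (1 - a)) + 1 / a * (x ^ (1 / a) + ε) ≤
      1 / (a - 1) * x ^ (1 / a) + 1 / a * ε := by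
  have ha0 : 0 < a := by rcases ha with h | h <;> linarith [h.1]
  have ha1 : a - 1 ≠ 0 := by
    rcases ha with h | h
    · linarith [h.2]
    · linarith [h.1]
  rcases eq_or_lt_of_le hx with rfl | hx
  · rw [Real.zero_rpow (by positivity)]
    simp
  set u := x ^ (1 / a) with hu
  have hu0 : 0 < u := Real.rpow_pos_of_pos hx _
  have e : x * u ^ (1 - a) = u := by
    rw [hu, ← Real.rpow_mul hx.le]
    conv_lhs => rw [← Real.rpow_one x, ← Real.rpow_mul hx.le, ← Real.rpow_add hx]
    congr 1
    field_simp
    ring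
  have key : 1 / (a * (a - 1)) * (x * (u + ε) ^ (1 - a)) ≤ 1 / (a * (a - 1)) * u := by
    rw [← e]
    conv_rhs => rw [e]
    rcases ha with h | h
    · refine mul_le_mul_of_nonpos_left ?_ ?_
      · conv_lhs => rw [← e]
        exact mul_le_mul_of_nonneg_left
          (Real.rpow_le_rpow hu0.le (by linarith) (by linarith [h.2])) hx.le
      · exact div_nonpos_of_nonneg_of_nonpos zero_le_one
          (mul_nonpos_of_nonneg_of_nonpos ha0.le (by linarith [h.2]))
    · refine mul_le_mul_of_nonneg_left ?_ ?_
      · conv_rhs => rw [← e]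
        exact mul_le_mul_of_nonneg_left
          (Real.rpow_le_rpow_of_nonpos hu0 (by linarith) (by linarith [h.1])) hx.le
      · have := sub_pos.2 h.1
        positivity
  have : 1 / (a * (a - 1)) * u + 1 / a * u = 1 / (a - 1) * u := by
    field_simp
    ring
  linarith

lemma cfc_posDef {d : ℕ} {A : Matrix (Fin d) (Fin d) ℂ} (hA : A.IsHermitian) (f : ℝ → ℝ)
    (hf : ∀ i, 0 < f (hA.eigenvalues i)) : (cfc f A).PosDef := by
  rw [cfc_UDU hA f]
  have hD : (diagonal (fun i => ((f (hA.eigenvalues i) : ℝ) : ℂ))).PosDef :=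
    Matrix.PosDef.diagonal fun i => by exact_mod_cast hf i
  refine hD.mul_mul_conjTranspose_same ?_
  refine Matrix.vecMul_injective_of_isUnit ?_
  exact ⟨⟨_, _, Unitary.coe_mul_star_self hA.eigenvectorUnitary,
    Unitary.coe_star_mul_self hA.eigenvectorUnitary⟩, rfl⟩

lemma trace_cfc {d : ℕ} {A : Matrix (Fin d) (Fin d) ℂ} (hA : A.IsHermitian) (f : ℝ → ℝ) :
    (cfc f A).trace.re = ∑ i, f (hA.eigenvalues i) := by
  rw [cfc_UDU hA f, Matrix.trace_mul_comm, ← Matrix.mul_assoc]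
  have : (hA.eigenvectorUnitary : Matrix (Fin d) (Fin d) ℂ)ᴴ * hA.eigenvectorUnitary = 1 :=
    Unitary.coe_star_mul_self hA.eigenvectorUnitary
  rw [this, Matrix.one_mul, Matrix.trace_diagonal]
  simp

lemma fin_cont {d : ℕ} (A : Matrix (Fin d) (Fin d) ℂ) (f : ℝ → ℝ) :
    ContinuousOn f (spectrum ℝ A) := (Matrix.finite_real_spectrum).continuousOn f

lemma young {d : ℕ} {a : ℝ} (ha : a ∈ Set.Ioo (0 : ℝ) 1 ∪ Set.Ioc (1 : ℝ) 2)
    {X Y : Matrix (Fin d) (Fin d) ℂ} (hX : X.PosSemidef) (hY : Y.PosDef) :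
    1 / (a - 1) * (mpow X (1 / a)).trace.re ≤
      1 / (a * (a - 1)) * (X * mpow Y (1 - a)).trace.re + 1 / a * Y.trace.re := by
  have h1 := TT_cfc 1 hX.1 hY.1 (fun x => x ^ (1 / a)) (fun _ => 1)
  have h2 := TT_cfc 1 hX.1 hY.1 (fun x => x) (fun y => y ^ (1 - a))
  have h3 := TT_cfc 1 hX.1 hY.1 (fun _ => 1) (fun y => y)
  rw [cfc_one_h hY.1] at h1
  rw [cfc_id_h hX.1] at h2
  rw [cfc_one_h hX.1, cfc_id_h hY.1] at h3
  simp only [TT, Matrix.conjTranspose_one, Matrix.one_mul, Matrix.mul_one] at h1 h2 h3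
  unfold mpow
  rw [h1, h2, h3]
  unfold JJ
  simp only [Finset.mul_sum, ← Finset.sum_add_distrib, ← mul_assoc, ← add_mul]
  refine Finset.sum_le_sum fun j _ => Finset.sum_le_sum fun k _ => ?_
  refine mul_le_mul_of_nonneg_right ?_ (Complex.normSq_nonneg _)
  have := scalar_young ha (hX.eigenvalues_nonneg k) (hY.eigenvalues_pos j)
  simpa only [mul_one, ← mul_assoc] using this

lemma eps_bound {d : ℕ} {a ε : ℝ} (ha : a ∈ Set.Ioo (0 : ℝ) 1 ∪ Set.Ioc (1 : ℝ) 2) (hε : 0 < ε)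
    {X : Matrix (Fin d) (Fin d) ℂ} (hX : X.PosSemidef) :
    ∃ Y : Matrix (Fin d) (Fin d) ℂ, Y.PosDef ∧
      1 / (a * (a - 1)) * (X * mpow Y (1 - a)).trace.re + 1 / a * Y.trace.re ≤
      1 / (a - 1) * (mpow X (1 / a)).trace.re + d * (1 / a * ε) := by
  refine ⟨cfc (fun x : ℝ => x ^ (1 / a) + ε) X, cfc_posDef hX.1 _ fun i => ?_, ?_⟩
  · have := Real.rpow_nonneg (hX.eigenvalues_nonneg i) (1 / a)
    linarith
  · have e : X * mpow (cfc (fun x : ℝ => x ^ (1 / a) + ε) X) (1 - a) =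
        cfc (fun x : ℝ => x * (x ^ (1 / a) + ε) ^ (1 - a)) X := by
      unfold mpow
      have hc : cfc (fun x : ℝ => x ^ (1 - a)) (cfc (fun x : ℝ => x ^ (1 / a) + ε) X) =
          cfc (fun x : ℝ => (x ^ (1 / a) + ε) ^ (1 - a)) X :=
        (cfc_comp' (fun x : ℝ => x ^ (1 - a)) (fun x : ℝ => x ^ (1 / a) + ε) X
          (((Matrix.finite_real_spectrum (A := X)).image _).continuousOn _) (fin_cont X _)
          hX.1).symm
      rw [hc]
      nth_rewrite 1 [← cfc_id_h hX.1]
      rw [← cfc_mul _ _ X (fin_cont X _) (fin_cont X _)]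
    rw [e]
    unfold mpow
    rw [trace_cfc hX.1, trace_cfc hX.1, trace_cfc hX.1]
    have : (d : ℝ) * (1 / a * ε) = ∑ _i : Fin d, 1 / a * ε := by simp
    rw [this]
    simp only [Finset.mul_sum, ← Finset.sum_add_distrib]
    exact Finset.sum_le_sum fun i _ => scalar_eps ha (hX.eigenvalues_nonneg i) hε

/-- For a CPTP map `E` and `a ∈ (0,1) ∪ (1,2]`, the closed-form resource measure
`ρ ↦ (Tr((E(ρ^a))^(1/a)) - 1)/(a - 1)` is convex on positive definite density
matrices. -/
theorem stmt_8 {d : ℕ}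
    (E : Matrix (Fin d) (Fin d) ℂ →ₗ[ℂ] Matrix (Fin d) (Fin d) ℂ)
    (hKraus : ∃ (n : ℕ) (K : Fin n → Matrix (Fin d) (Fin d) ℂ),
      (∀ X, E X = ∑ i, K i * X * (K i)ᴴ) ∧ ∑ i, (K i)ᴴ * K i = 1)
    (a : ℝ) (ha : a ∈ Set.Ioo (0 : ℝ) 1 ∪ Set.Ioc (1 : ℝ) 2) :
    ∀ ρ₁ ρ₂ : Matrix (Fin d) (Fin d) ℂ, ρ₁.PosDef → ρ₁.trace = 1 →
      ρ₂.PosDef → ρ₂.trace = 1 → ∀ t : ℝ, t ∈ Set.Icc (0 : ℝ) 1 →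
      (((mpow (E (mpow ((t : ℂ) • ρ₁ + ((1 - t : ℝ) : ℂ) • ρ₂) a)) (1 / a)).trace).re - 1)
          / (a - 1)
        ≤ t * ((((mpow (E (mpow ρ₁ a)) (1 / a)).trace).re - 1) / (a - 1))
          + (1 - t) * ((((mpow (E (mpow ρ₂ a)) (1 / a)).trace).re - 1) / (a - 1)) := by

  intro ρ₁ ρ₂ h₁ _ h₂ _ t ht
  obtain ⟨n, K, hE, -⟩ := hKraus
  have ha0 : 0 < a := by rcases ha with h | h <;> linarith [h.1]
  have hm := mix_posDef h₁ h₂ ht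
  have hpsd : ∀ ρ : Matrix (Fin d) (Fin d) ℂ, ρ.PosDef → (E (mpow ρ a)).PosSemidef := by
    intro ρ hρ
    rw [hE]
    refine Matrix.posSemidef_sum _ fun i _ => ?_
    exact (cfc_posDef hρ.1 _ fun i => Real.rpow_pos_of_pos (hρ.eigenvalues_pos i) a
      ).posSemidef.mul_mul_conjTranspose_same _
  have hT : ∀ (ρ Y : Matrix (Fin d) (Fin d) ℂ) (hρ : ρ.PosDef) (hY : Y.PosDef),
      1 / (a * (a - 1)) * (E (mpow ρ a) * mpow Y (1 - a)).trace.re =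
        ∑ i, JJ (fun x y => 1 / (a * (a - 1)) * (x ^ a * y ^ (1 - a))) (K i) hρ.1 hY.1 := by
    intro ρ Y hρ hY
    rw [hE, Finset.sum_mul, Matrix.trace_sum, Complex.re_sum, Finset.mul_sum]
    refine Finset.sum_congr rfl fun i _ => ?_
    rw [JJ_const_mul, ← TT_cfc (K i) hρ.1 hY.1 (fun x => x ^ a) (fun y => y ^ (1 - a))]
    rfl
  suffices h : ∀ δ : ℝ, 0 < δ →
      1 / (a - 1) * (mpow (E (mpow ((t : ℂ) • ρ₁ + ((1 - t : ℝ) : ℂ) • ρ₂) a)) (1 / a)).trace.re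
        ≤ t * (1 / (a - 1) * (mpow (E (mpow ρ₁ a)) (1 / a)).trace.re)
          + (1 - t) * (1 / (a - 1) * (mpow (E (mpow ρ₂ a)) (1 / a)).trace.re) + d * (1 / a * δ) by
    have h' := le_of_forall_pos_le_add (α := ℝ) (a :=
      1 / (a - 1) * (mpow (E (mpow ((t : ℂ) • ρ₁ + ((1 - t : ℝ) : ℂ) • ρ₂) a)) (1 / a)).trace.re)
      (b := t * (1 / (a - 1) * (mpow (E (mpow ρ₁ a)) (1 / a)).trace.re)
          + (1 - t) * (1 / (a - 1) * (mpow (E (mpow ρ₂ a)) (1 / a)).trace.re)) (by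
        intro η hη
        refine (h (a * η / (d + 1)) (by positivity)).trans ?_
        gcongr
        have : (d : ℝ) * (1 / a * (a * η / (d + 1))) = η * (d / (d + 1)) := by
          field_simp
        rw [this]
        refine mul_le_of_le_one_right hη.le ?_
        rw [div_le_one (by positivity)]
        linarith)
    simp only [sub_div, one_div, div_eq_inv_mul, mul_one] at h' ⊢
    linarith
  intro ε hε
  obtain ⟨Y₁, hY₁, b₁⟩ := eps_bound ha hε (hpsd ρ₁ h₁)
  obtain ⟨Y₂, hY₂, b₂⟩ := eps_bound ha hε (hpsd ρ₂ h₂)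
  have y := young ha (hpsd _ hm) (mix_posDef hY₁ hY₂ ht)
  rw [hT _ _ hm (mix_posDef hY₁ hY₂ ht)] at y
  rw [hT _ _ h₁ hY₁] at b₁
  rw [hT _ _ h₂ hY₂] at b₂
  have c := Finset.sum_le_sum fun (i : Fin n) (_ : i ∈ Finset.univ) =>
    CJ_main d ha (K i) ρ₁ ρ₂ Y₁ Y₂ h₁ h₂ hY₁ hY₂ t ht
  rw [Finset.sum_add_distrib, ← Finset.mul_sum, ← Finset.mul_sum] at c
  have tr : ((t : ℂ) • Y₁ + ((1 - t : ℝ) : ℂ) • Y₂).trace.re =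
      t * Y₁.trace.re + (1 - t) * Y₂.trace.re := by
    simp only [Matrix.trace_add, Matrix.trace_smul, smul_eq_mul, Complex.add_re,
      Complex.re_ofReal_mul]
  rw [tr] at y
  have m₁ := mul_le_mul_of_nonneg_left b₁ ht.1
  have m₂ := mul_le_mul_of_nonneg_left b₂ (sub_nonneg.2 ht.2)
  linarith
end
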